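/- For a finite solvable group G the following statements are equivalent: (1) G is an SST-group; (2) every subgroup of G is either SS-permutable or abnormal in G; (3) every subgroup of G is either NSS-permutable or abnormal in G. -/

import Mathlib

open scoped Pointwise

section Defs

variable {G : Type*} [Group G]

/-- `K` is an SS-permutable supplement of `H` in `G`: `HK = G` and `H` permutes with
every Sylow subgroup of `K`. -/
def IsSSSupplement (H K : Subgroup G) : Prop :=
  (H : Set G) * (K : Set G) = Set.univ ∧
    ∀ (p : ℕ) [Fact p.Prime] (P : Sylow p K),
      (H : Set G) * ((P.toSubgroup.map K.subtype : Subgroup G) : Set G) =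
        ((P.toSubgroup.map K.subtype : Subgroup G) : Set G) * (H : Set G)

/-- `H` is SS-permutable in `G`: `H` has a supplement `K` such that `H` permutes with
every Sylow subgroup of `K`. -/
def IsSSPermutable (H : Subgroup G) : Prop :=
  ∃ K : Subgroup G, IsSSSupplement H K

/-- `H` is NSS-permutable in `G`: `H` has a normal supplement `K` such that `H` permutes
with every Sylow subgroup of `K`. -/
def IsNSSPermutable (H : Subgroup G) : Prop :=
  ∃ K : Subgroup G, K.Normal ∧ IsSSSupplement H K

/-- `H` is S-permutable in `G`: it permutes with every Sylow subgroup of `G`. -/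
def IsSPermutable (H : Subgroup G) : Prop :=
  ∀ (p : ℕ) [Fact p.Prime] (P : Sylow p G),
    (H : Set G) * ((P : Subgroup G) : Set G) = ((P : Subgroup G) : Set G) * (H : Set G)

/-- `H` is semipermutable in `G`: `HX = XH` for every subgroup `X` with `gcd(|H|,|X|) = 1`. -/
def IsSemipermutable (H : Subgroup G) : Prop :=
  ∀ X : Subgroup G, Nat.Coprime (Nat.card H) (Nat.card X) →
    (H : Set G) * (X : Set G) = (X : Set G) * (H : Set G)

/-- `H` is S-semipermutable in `G`: `HQ = QH` for every Sylow `q`-subgroup `Q` of `G`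
with `q` a prime not dividing `|H|`. -/
def IsSSemipermutable (H : Subgroup G) : Prop :=
  ∀ (q : ℕ) [Fact q.Prime], ¬ q ∣ Nat.card H → ∀ Q : Sylow q G,
    (H : Set G) * ((Q : Subgroup G) : Set G) = ((Q : Subgroup G) : Set G) * (H : Set G)

end Defs

/-- `G` is an SST-group: SS-permutability is a transitive relation. -/
def IsSSTGroup (G : Type*) [Group G] : Prop :=
  ∀ H K : Subgroup G, H ≤ K → IsSSPermutable (H.subgroupOf K) → IsSSPermutable K →
    IsSSPermutable H

/-- `G` is an NSST-group: NSS-permutability is a transitive relation. -/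
def IsNSSTGroup (G : Type*) [Group G] : Prop :=
  ∀ H K : Subgroup G, H ≤ K → IsNSSPermutable (H.subgroupOf K) → IsNSSPermutable K →
    IsNSSPermutable H

/-- `G` is a PST-group: S-permutability is a transitive relation. -/
def IsPSTGroup (G : Type*) [Group G] : Prop :=
  ∀ H K : Subgroup G, H ≤ K → IsSPermutable (H.subgroupOf K) → IsSPermutable K →
    IsSPermutable H

/-- `G` is a BT-group: semipermutability is a transitive relation. -/
def IsBTGroup (G : Type*) [Group G] : Prop :=
  ∀ H K : Subgroup G, H ≤ K → IsSemipermutable (H.subgroupOf K) → IsSemipermutable K →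
    IsSemipermutable H

/-- `H` is abnormal in `G`: `g ∈ ⟨H, H^g⟩` for every `g ∈ G`. -/
def IsAbnormal {G : Type*} [Group G] (H : Subgroup G) : Prop :=
  ∀ g : G, g ∈ H ⊔ H.map (MulAut.conj g).toMonoidHom

open Subgroup

/-- Two subgroups permute if their setwise product does not depend on the order. -/
def Subgroup.Permutes {G : Type*} [Group G] (H K : Subgroup G) : Prop :=
  (H : Set G) * (K : Set G) = (K : Set G) * (H : Set G)

section Permutes

variable {G : Type*} [Group G] {H K : Subgroup G}

theorem Subgroup.Permutes.symm (h : H.Permutes K) : K.Permutes H :=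
  Eq.symm h

theorem Subgroup.Permutes.exists_mul_eq (hHK : H.Permutes K) {h k : G} (hh : h ∈ H) (hk : k ∈ K) :
    ∃ k' ∈ K, ∃ h' ∈ H, k' * h' = h * k := by
  have : h * k ∈ (K : Set G) * (H : Set G) := hHK ▸ Set.mul_mem_mul hh hk
  exact Set.mem_mul.1 this

theorem Subgroup.permutes_of_forall_exists
    (hHK : ∀ h ∈ H, ∀ k ∈ K, ∃ k' ∈ K, ∃ h' ∈ H, k' * h' = h * k) : H.Permutes K := by
  refine Set.Subset.antisymm ?_ ?_
  · rintro _ ⟨h, hh, k, hk, rfl⟩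
    exact Set.mem_mul.2 (hHK h hh k hk)
  · rintro _ ⟨k, hk, h, hh, rfl⟩
    obtain ⟨k', hk', h', hh', e⟩ := hHK h⁻¹ (inv_mem hh) k⁻¹ (inv_mem hk)
    refine Set.mem_mul.2 ⟨h'⁻¹, inv_mem hh', k'⁻¹, inv_mem hk', ?_⟩
    have := congrArg (·⁻¹) e
    simpa using this

theorem Subgroup.permutes_of_normal (H K : Subgroup G) [K.Normal] : H.Permutes K :=
  set_mul_normal_comm _ _

theorem Subgroup.permutes_of_le (h : H ≤ K) : H.Permutes K :=
  permutes_of_forall_exists fun x hx k hk => ⟨x * k, mul_mem (h hx) hk, 1, one_mem _, mul_one _⟩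

theorem Subgroup.Permutes.map {G' : Type*} [Group G'] (h : H.Permutes K) (f : G →* G') :
    (H.map f).Permutes (K.map f) := by
  unfold Permutes at *
  simp only [coe_map, ← Set.image_mul, h]

theorem Subgroup.Permutes.mem_sup (h : H.Permutes K) {x : G} (hx : x ∈ H ⊔ K) :
    ∃ y ∈ H, ∃ z ∈ K, y * z = x := by
  rw [sup_eq_closure] at hx
  induction hx using closure_induction'' with
  | one => exact ⟨1, one_mem _, 1, one_mem _, mul_one _⟩
  | mem x hx =>
    rcases hx with hx | hx
    · exact ⟨x, hx, 1, one_mem _, mul_one _⟩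
    · exact ⟨1, one_mem _, x, hx, one_mul _⟩
  | inv_mem x hx =>
    rcases hx with hx | hx
    · exact ⟨x⁻¹, inv_mem hx, 1, one_mem _, mul_one _⟩
    · exact ⟨1, one_mem _, x⁻¹, inv_mem hx, one_mul _⟩
  | mul x y _ _ hx hy =>
    obtain ⟨a, ha, b, hb, rfl⟩ := hx
    obtain ⟨c, hc, d, hd, rfl⟩ := hy
    obtain ⟨c', hc', b', hb', e⟩ := h.symm.exists_mul_eq hb hc
    refine ⟨a * c', mul_mem ha hc', b' * d, mul_mem hb' hd, ?_⟩
    calc a * c' * (b' * d) = a * (c' * b') * d := by group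
      _ = a * b * (c * d) := by rw [e]; group

theorem Subgroup.Permutes.iSup_left {ι : Sort*} {H : ι → Subgroup G}
    (h : ∀ i, (H i).Permutes K) : (⨆ i, H i).Permutes K := by
  refine permutes_of_forall_exists fun x hx => ?_
  induction hx using Subgroup.iSup_induction' with
  | hp i x hx =>
    intro k hk
    obtain ⟨k', hk', x', hx', e⟩ := (h i).exists_mul_eq hx hk
    exact ⟨k', hk', x', mem_iSup_of_mem i hx', e⟩
  | h1 => exact fun k hk => ⟨k, hk, 1, one_mem _, by simp⟩
  | hmul x y _ _ hx hy =>
    intro k hk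
    obtain ⟨k', hk', y', hy', e⟩ := hy k hk
    obtain ⟨k'', hk'', x', hx', e'⟩ := hx k' hk'
    refine ⟨k'', hk'', x' * y', mul_mem hx' hy', ?_⟩
    rw [← mul_assoc, e', mul_assoc, e, mul_assoc]

theorem Subgroup.index_eq_relIndex_of_mul_eq_univ
    (h : (H : Set G) * (K : Set G) = Set.univ) : K.index = K.relIndex H := by
  have htrans : MulAction.IsPretransitive H (G ⧸ K) := by
    refine (MulAction.isPretransitive_iff_base ((1 : G) : G ⧸ K)).2 fun y => ?_
    obtain ⟨g, rfl⟩ := QuotientGroup.mk_surjective y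
    obtain ⟨a, ha, b, hb, rfl⟩ := Set.mem_mul.1 (h ▸ Set.mem_univ g)
    refine ⟨⟨a, ha⟩, ?_⟩
    change ((a * 1 : G) : G ⧸ K) = _
    rw [QuotientGroup.eq]
    simpa using hb
  rw [index_eq_card, ← MulAction.index_stabilizer_of_transitive H ((1 : G) : G ⧸ K)]
  congr 1
  ext x
  rw [MulAction.mem_stabilizer_iff, mem_subgroupOf]
  change ((x * 1 : G) : G ⧸ K) = _ ↔ _
  rw [QuotientGroup.eq]
  simp

theorem Subgroup.Permutes.relIndex_sup (h : H.Permutes K) :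
    K.relIndex (H ⊔ K) = K.relIndex H := by
  have := index_eq_relIndex_of_mul_eq_univ (H := H.subgroupOf (H ⊔ K))
    (K := K.subgroupOf (H ⊔ K)) (Set.eq_univ_of_forall fun x : ↥(H ⊔ K) => by
      obtain ⟨y, hy, z, hz, e⟩ := h.mem_sup x.2
      exact Set.mem_mul.2 ⟨⟨y, mem_sup_left hy⟩, hy, ⟨z, mem_sup_right hz⟩, hz, Subtype.ext e⟩)
  rwa [relIndex_subgroupOf le_sup_left] at this

theorem Subgroup.Permutes.isPGroup_sup [Finite G] {p : ℕ} [Fact p.Prime] (h : H.Permutes K)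
    (hH : IsPGroup p H) (hK : IsPGroup p K) : IsPGroup p (H ⊔ K : Subgroup G) := by
  obtain ⟨m, hm⟩ := hH.index (K.subgroupOf H)
  obtain ⟨n, hn⟩ := IsPGroup.iff_card.1 hK
  refine IsPGroup.of_card (n := n + m) ?_
  rw [← card_mul_index (K.subgroupOf (H ⊔ K))]
  change Nat.card _ * K.relIndex (H ⊔ K) = _
  rw [h.relIndex_sup, relIndex, hm,
    Nat.card_congr (subgroupOfEquivOfLe (le_sup_right : K ≤ H ⊔ K)).toEquiv, hn, pow_add]

end Permutes

section SSPermutable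

variable {G : Type*} [Group G] {H K : Subgroup G}

theorem Sylow.coe_smul_eq_map {p : ℕ} (g : G) (P : Sylow p G) :
    ((g • P : Sylow p G) : Subgroup G) =
      (P : Subgroup G).map (MulAut.conj g).toMonoidHom :=
  rfl

theorem Subgroup.map_conj_eq_self {g : G} (hg : g ∈ H) :
    H.map (MulAut.conj g).toMonoidHom = H :=
  conj_smul_eq_self_of_mem hg

theorem IsSSSupplement.permutes_conj (h : IsSSSupplement H K) {p : ℕ} [Fact p.Prime]
    (P : Sylow p K) (g : G) :
    H.Permutes ((P.toSubgroup.map K.subtype).map (MulAut.conj g).toMonoidHom) := by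
  obtain ⟨a, ha, b, hb, rfl⟩ := Set.mem_mul.1 (h.1 ▸ Set.mem_univ g)
  have key : H.Permutes (((⟨b, hb⟩ : K) • P : Sylow p K).toSubgroup.map K.subtype) := h.2 p _
  have := key.map (MulAut.conj a).toMonoidHom
  rw [map_conj_eq_self ha] at this
  convert this using 1
  rw [Sylow.coe_smul_eq_map, map_map, map_map, map_map]
  congr 1
  ext x
  simp

theorem IsSSPermutable.exists_sup_eq_sylow [Finite G] (h : IsSSPermutable H) {p : ℕ}
    [Fact p.Prime] (P : Sylow p G) (hHP : H ≤ P) :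
    ∃ X : Subgroup G, H ⊔ X = P ∧ ∀ g, H.Permutes (X.map (MulAut.conj g).toMonoidHom) := by
  obtain ⟨K, hK⟩ := h
  have hPK : IsPGroup p ((P : Subgroup G).subgroupOf K) := P.isPGroup'.comap_subtype
  obtain ⟨X, hX⟩ := hPK.exists_le_sylow
  refine ⟨X.toSubgroup.map K.subtype, ?_, hK.permutes_conj X⟩
  have hperm : H.Permutes (X.toSubgroup.map K.subtype) := hK.2 p X
  refine P.is_maximal' (hperm.isPGroup_sup (P.isPGroup'.to_le hHP) (X.isPGroup'.map _)) ?_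
  intro x hx
  obtain ⟨a, ha, b, hb, rfl⟩ := Set.mem_mul.1 (hK.1 ▸ Set.mem_univ x)
  have hbP : b ∈ (P : Subgroup G) := by simpa using mul_mem (inv_mem (hHP ha)) hx
  exact mul_mem (mem_sup_left ha)
    (mem_sup_right (mem_map.2 ⟨⟨b, hb⟩, hX (mem_subgroupOf.2 hbP), rfl⟩))

theorem IsSSPermutable.permutes_sylow_of_ne [Finite G] (h : IsSSPermutable H) {p q : ℕ}
    [Fact p.Prime] [Fact q.Prime] (hpq : p ≠ q) (hH : IsPGroup p H) (Q : Sylow q G) :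
    H.Permutes (Q : Subgroup G) := by
  obtain ⟨K, hK⟩ := h
  let X : Sylow q K := default
  have hidx : ¬ q ∣ (X.toSubgroup.map K.subtype).index := by
    rw [index_map_subtype, index_eq_relIndex_of_mul_eq_univ hK.1, relIndex]
    obtain ⟨n, hn⟩ := hH.index (K.subgroupOf H)
    rw [hn, (Fact.out : q.Prime).dvd_mul, not_or]
    refine ⟨X.not_dvd_index, fun hd => hpq.symm ?_⟩
    exact (Nat.prime_dvd_prime_iff_eq Fact.out Fact.out).1 ((Fact.out : q.Prime).dvd_of_dvd_pow hd)
  obtain ⟨g, rfl⟩ := MulAction.exists_smul_eq G ((X.isPGroup'.map K.subtype).toSylow hidx) Q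
  exact hK.permutes_conj X g

theorem IsAbnormal.eq_top_of_le_normal (h : IsAbnormal H) {N : Subgroup G} [hN : N.Normal]
    (hHN : H ≤ N) : N = ⊤ := by
  refine (eq_top_iff' N).2 fun g => ?_
  refine (sup_le hHN ?_) (h g)
  rintro _ ⟨x, hx, rfl⟩
  exact hN.conj_mem x (hHN hx) g

theorem IsAbnormal.mem_of_mem_normalizer (h : IsAbnormal H) {g : G}
    (hg : g ∈ normalizer (H : Set G)) : g ∈ H := by
  refine (sup_le (le_refl H) ?_) (h g)
  rintro _ ⟨x, hx, rfl⟩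
  exact (mem_normalizer_iff.1 hg x).1 hx

theorem IsAbnormal.eq_of_le_sylow [Finite G] (h : IsAbnormal H) {p : ℕ} [Fact p.Prime]
    {P : Sylow p G} (hHP : H ≤ P) : H = P := by
  by_contra hne
  have : Group.IsNilpotent P := P.isPGroup'.isNilpotent
  have hlt : H.subgroupOf P < ⊤ := by
    rw [lt_top_iff_ne_top, Ne, subgroupOf_eq_top]
    exact fun hle => hne (le_antisymm hHP hle)
  obtain ⟨x, hx, hxH⟩ := SetLike.exists_of_lt (Group.normalizerCondition_of_isNilpotent _ hlt)
  refine hxH (mem_subgroupOf.2 (h.mem_of_mem_normalizer (mem_normalizer_iff.2 fun y => ?_)))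
  have hxP : (x : G) ∈ (P : Subgroup G) := x.2
  refine ⟨fun hy => ?_, fun hy => ?_⟩
  · exact (mem_normalizer_iff.1 hx ⟨y, hHP hy⟩).1 hy
  · have hyP : y ∈ (P : Subgroup G) := by
      have := mul_mem (mul_mem (inv_mem hxP) (hHP hy)) hxP
      simpa [mul_assoc] using this
    exact (mem_normalizer_iff.1 hx ⟨y, hyP⟩).2 hy

/-- Every subgroup is SS-permutable or abnormal. -/
def SSPermutableOrAbnormal (G : Type*) [Group G] : Prop :=
  ∀ H : Subgroup G, IsSSPermutable H ∨ IsAbnormal H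

theorem SSPermutableOrAbnormal.subgroup (h : SSPermutableOrAbnormal G) (M : Subgroup G) :
    SSPermutableOrAbnormal M := by
  intro H
  refine (h (H.map M.subtype)).imp ?_ ?_
  · rintro ⟨K, hK⟩
    refine ⟨K.subgroupOf M, ?_, ?_⟩
    · refine Set.eq_univ_of_forall fun x : M => ?_
      obtain ⟨_, ⟨a, ha, rfl⟩, b, hb, e⟩ := Set.mem_mul.1 (hK.1 ▸ Set.mem_univ (x : G))
      have hbM : b ∈ M := by
        have : b = ((a⁻¹ * x : M) : G) := by simp [← e]
        exact this ▸ SetLike.coe_mem _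
      exact Set.mem_mul.2 ⟨a, ha, ⟨b, hbM⟩, hb, Subtype.ext e⟩
    · intro p _ X
      change H.Permutes _
      let f : K.subgroupOf M →* K := (M.subtype.subgroupComap K)
      obtain ⟨Y, hY⟩ := (X.isPGroup'.map f).exists_le_sylow
      have hXY : X.toSubgroup = Y.toSubgroup.comap f := by
        refine (X.is_maximal' (Y.isPGroup'.comap_of_injective f ?_) (map_le_iff_le_comap.1 hY)).symm
        intro x y hxy
        exact Subtype.ext (Subtype.ext (congrArg (fun z : K => (z : G)) hxy))
      refine permutes_of_forall_exists ?_
      rintro a ha _ ⟨x, hx, rfl⟩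
      obtain ⟨_, ⟨y, hy, rfl⟩, _, ⟨b, hb, rfl⟩, e⟩ :=
        Permutes.exists_mul_eq (hK.2 p Y) (mem_map_of_mem M.subtype ha)
          (mem_map_of_mem K.subtype (hY (mem_map_of_mem f hx)))
      have hyM : (y : G) ∈ M := by
        have : (y : G) = ((a * x * b⁻¹ : M) : G) := by
          simp only [coe_mul, coe_inv, eq_mul_inv_iff_mul_eq]
          exact e
        exact this ▸ SetLike.coe_mem _
      refine ⟨⟨y, hyM⟩, ⟨⟨⟨y, hyM⟩, y.2⟩, ?_, rfl⟩, b, hb, Subtype.ext e⟩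
      rw [hXY]
      exact hy
  · intro hab g
    have := hab (g : G)
    have e : H.map M.subtype ⊔ (H.map M.subtype).map (MulAut.conj (g : G)).toMonoidHom =
        (H ⊔ H.map (MulAut.conj g).toMonoidHom).map M.subtype := by
      rw [Subgroup.map_sup, map_map, map_map]
      rfl
    rw [e] at this
    obtain ⟨x, hx, hxg⟩ := this
    exact (Subtype.ext hxg : x = g) ▸ hx

theorem SSPermutableOrAbnormal.quotient [Finite G] (h : SSPermutableOrAbnormal G)
    (N : Subgroup G) [N.Normal] : SSPermutableOrAbnormal (G ⧸ N) := by
  intro H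
  have hsurj := QuotientGroup.mk'_surjective N
  have hmap : (H.comap (QuotientGroup.mk' N)).map (QuotientGroup.mk' N) = H :=
    map_comap_eq_self_of_surjective hsurj H
  refine (h (H.comap (QuotientGroup.mk' N))).imp ?_ ?_
  · rintro ⟨K, hK⟩
    refine ⟨K.map (QuotientGroup.mk' N), ?_, ?_⟩
    · rw [← hmap, coe_map, coe_map, ← Set.image_mul, hK.1, Set.image_univ_of_surjective hsurj]
    · intro p _ X
      have hf := (QuotientGroup.mk' N).subgroupMap_surjective K
      obtain ⟨Y, rfl⟩ := Sylow.mapSurjective_surjective hf p X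
      have := Permutes.map (hK.2 p Y) (QuotientGroup.mk' N)
      rw [hmap, map_map] at this
      convert this using 1
      rw [Sylow.coe_mapSurjective, map_map]
      rfl
  · intro hab g
    obtain ⟨g, rfl⟩ := hsurj g
    have := mem_map_of_mem (QuotientGroup.mk' N) (hab g)
    rw [Subgroup.map_sup, hmap, map_map] at this
    convert this using 2
    conv_lhs => rw [← hmap, map_map]
    rfl

end SSPermutable

section Structure

variable {G : Type*} [Group G] {p : ℕ}

theorem IsAbnormal.isPGroup_abelianization {H : Subgroup G} (h : IsAbnormal H)
    (hH : IsPGroup p H) : IsPGroup p (⊤ : Subgroup (Abelianization G)) := by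
  have hnormal : ((H.map Abelianization.of).comap Abelianization.of).Normal := inferInstance
  have htop := h.eq_top_of_le_normal (le_comap_map Abelianization.of H)
  have hsurj : Function.Surjective (Abelianization.of (G := G)) := QuotientGroup.mk_surjective
  rw [← comap_top Abelianization.of] at htop
  rw [← comap_injective hsurj htop]
  exact hH.map _

theorem Subgroup.eq_of_conj_eq_of_disjoint {P V : Subgroup G} [V.Normal] (hPV : Disjoint P V)
    {x y w : G} (hx : x ∈ P) (hy : y ∈ P) (hw : w ∈ V) (h : w * y * w⁻¹ = x) : y = x := by
  have : x * y⁻¹ ∈ V := by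
    rw [← h]
    have := mul_mem hw (Normal.conj_mem ‹V.Normal› _ (inv_mem hw) y)
    simpa [mul_assoc] using this
  have := disjoint_def.1 hPV (mul_mem hx (inv_mem hy)) this
  exact (mul_inv_eq_one.1 this).symm

theorem Subgroup.commute_of_commute_mul [Fact p.Prime] {V : Subgroup G} [V.Normal]
    (hV : ¬ p ∣ Nat.card V) {h k a b : G}
    (hhk : Commute h k) (hk : k ^ p = 1) (ha : a ∈ V) (hah : Commute h a) (hbk : Commute k b)
    (hab : Commute (h * k) (a * b)) : Commute k a ∧ Commute h b := by
  set d := a⁻¹ * (k * a * k⁻¹) with hd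
  have hdV : d ∈ V := mul_mem (inv_mem ha) (Normal.conj_mem ‹V.Normal› a ha k)
  have hd' : d = b * (h * b * h⁻¹)⁻¹ := by
    have e1 : h * k * (a * b) * (h * k)⁻¹ = a * b := mul_inv_eq_iff_eq_mul.2 hab.eq
    have e2 : h * k * (a * b) * (h * k)⁻¹ = (k * a * k⁻¹) * (h * b * h⁻¹) := by
      calc h * k * (a * b) * (h * k)⁻¹ = (h * k) * a * (h * k)⁻¹ * (h * (k * b * k⁻¹) * h⁻¹) := by
            group
        _ = (k * h) * a * (k * h)⁻¹ * (h * (k * b * k⁻¹) * h⁻¹) := by rw [hhk.eq]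
        _ = k * (h * a * h⁻¹) * k⁻¹ * (h * (k * b * k⁻¹) * h⁻¹) := by group
        _ = (k * a * k⁻¹) * (h * b * h⁻¹) := by
          rw [mul_inv_eq_iff_eq_mul.2 hah.eq, mul_inv_eq_iff_eq_mul.2 hbk.eq]
    rw [hd, eq_mul_inv_iff_mul_eq, mul_assoc, ← e2, e1]
    group
  have hkd : Commute k d := by
    rw [hd']
    exact hbk.mul_right (((hhk.symm.mul_right hbk).mul_right hhk.symm.inv_right).inv_right)
  have hpow : ∀ n : ℕ, k ^ n * a * (k ^ n)⁻¹ = a * d ^ n := by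
    intro n
    induction n with
    | zero => simp
    | succ n ih =>
      calc k ^ (n + 1) * a * (k ^ (n + 1))⁻¹ = k * (k ^ n * a * (k ^ n)⁻¹) * k⁻¹ := by
            rw [pow_succ']; group
        _ = (k * a * k⁻¹) * (k * d ^ n * k⁻¹) := by rw [ih]; group
        _ = a * d ^ (n + 1) := by
            rw [mul_inv_eq_iff_eq_mul.2 (hkd.pow_right n).eq, pow_succ',
              show k * a * k⁻¹ = a * d by rw [hd]; group, mul_assoc]
  have hdp : d ^ p = 1 := by simpa [hk] using (hpow p).symm
  have hd1 : d = 1 := by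
    have hdc : d ^ Nat.card V = 1 := by
      exact congrArg Subtype.val (pow_card_eq_one' (x := (⟨d, hdV⟩ : V)))
    have hcop : Nat.Coprime p (Nat.card V) := (Fact.out : p.Prime).coprime_iff_not_dvd.2 hV
    simpa [hcop.gcd_eq_one] using pow_gcd_eq_one.2 ⟨hdp, hdc⟩
  refine ⟨?_, ?_⟩
  · exact mul_inv_eq_iff_eq_mul.1 (inv_mul_eq_one.1 (hd.symm.trans hd1)).symm
  · exact mul_inv_eq_iff_eq_mul.1 (mul_inv_eq_one.1 (hd'.symm.trans hd1)).symm

variable [Finite G] [Fact p.Prime]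

theorem SSPermutableOrAbnormal.permutes_sylow [Group.IsSolvable G] (h : SSPermutableOrAbnormal G)
    {q : ℕ} [Fact q.Prime] (hpq : p ≠ q) {H : Subgroup G} (hH : IsPGroup p H) (Q : Sylow q G) :
    H.Permutes (Q : Subgroup G) := by
  rcases h H with hss | hab
  · exact hss.permutes_sylow_of_ne hpq hH Q
  obtain ⟨P, hHP⟩ := hH.exists_le_sylow
  rcases h Q with hss | hab'
  · rw [hab.eq_of_le_sylow hHP]
    exact (hss.permutes_sylow_of_ne hpq.symm Q.isPGroup' P).symm
  · have hdisj := IsPGroup.disjoint_of_ne p q hpq _ _ (hab.isPGroup_abelianization hH)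
      (hab'.isPGroup_abelianization Q.isPGroup')
    have hsub : Subsingleton (Abelianization G) :=
      subsingleton_iff_bot_eq_top.1 (disjoint_self.1 hdisj).symm |> fun h => by
        exact (Subgroup.subsingleton_iff).1 h
    rcases subsingleton_or_nontrivial G with _ | _
    · rw [Subsingleton.elim H Q]
      rfl
    · refine absurd ?_ (Group.IsSolvable.commutator_lt_top_of_nontrivial G).ne
      exact QuotientGroup.subsingleton_iff.1 hsub

/-- A factorisation of a normal complement of a Sylow subgroup into centralizers. -/
theorem IsSSPermutable.exists_sup_eq_sylow_and_factorization {H V : Subgroup G} [V.Normal]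
    (h : IsSSPermutable H) (P : Sylow p G) (hHP : H ≤ P) (hV : ¬ p ∣ Nat.card V)
    (hsup : V ⊔ P = ⊤) :
    ∃ X : Subgroup G, H ⊔ X = P ∧ ∀ v ∈ V, ∃ a ∈ V, ∃ b ∈ V, a * b = v ∧
      (∀ x ∈ H, Commute x a) ∧ ∀ x ∈ X, Commute x b := by
  obtain ⟨X, hX, hperm⟩ := h.exists_sup_eq_sylow P hHP
  have hdisj : Disjoint (P : Subgroup G) V := by
    obtain ⟨n, hn⟩ := IsPGroup.iff_card.1 P.isPGroup'
    refine disjoint_of_coprime_natCard ?_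
    rw [hn]
    exact Nat.Coprime.pow_left _ (((Fact.out : p.Prime).coprime_iff_not_dvd).2 hV)
  have hXP : X ≤ P := hX ▸ le_sup_right
  refine ⟨X, hX, fun v hv => ?_⟩
  obtain ⟨Q, hQ⟩ := ((hperm v).isPGroup_sup (P.isPGroup'.to_le hHP)
    ((P.isPGroup'.to_le hXP).map _)).exists_le_sylow
  obtain ⟨g, rfl⟩ := MulAction.exists_smul_eq G P Q
  obtain ⟨w, hw, u, hu, rfl⟩ := mem_sup_of_normal_left.1 (hsup ▸ mem_top g)
  have hle : H ⊔ X.map (MulAut.conj v).toMonoidHom ≤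
      (P : Subgroup G).map (MulAut.conj w).toMonoidHom := by
    refine hQ.trans (le_of_eq ?_)
    rw [mul_smul, Sylow.coe_smul_eq_map, Sylow.coe_smul_eq_map, map_conj_eq_self hu]
  refine ⟨w, hw, w⁻¹ * v, mul_mem (inv_mem hw) hv, by group, fun x hx => ?_, fun x hx => ?_⟩
  · obtain ⟨y, hy, e⟩ := hle (mem_sup_left hx)
    have e' : w * y * w⁻¹ = x := e
    obtain rfl := eq_of_conj_eq_of_disjoint hdisj (hHP hx) hy hw e'
    exact (mul_inv_eq_iff_eq_mul.1 e').symm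
  · obtain ⟨y, hy, e⟩ := hle (mem_sup_right (mem_map_of_mem _ hx))
    have e' : w * y * w⁻¹ = v * x * v⁻¹ := e
    have e'' : (v⁻¹ * w) * y * (v⁻¹ * w)⁻¹ = x := by
      simp only [mul_inv_rev, inv_inv]
      calc v⁻¹ * w * y * (w⁻¹ * v) = v⁻¹ * (w * y * w⁻¹) * v := by group
        _ = x := by rw [e']; group
    obtain rfl := eq_of_conj_eq_of_disjoint hdisj (hXP hx) hy (mul_mem (inv_mem hv) hw) e''
    have hc : Commute y (v⁻¹ * w) := (mul_inv_eq_iff_eq_mul.1 e'').symm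
    simpa using hc.inv_right

theorem SSPermutableOrAbnormal.isSSPermutable_of_lt_sylow (h : SSPermutableOrAbnormal G)
    {P : Sylow p G} {H : Subgroup G} (hHP : H < P) : IsSSPermutable H :=
  (h H).resolve_right fun hab => hHP.ne (hab.eq_of_le_sylow hHP.le)

/-- A group with trivial `p`-core and a normal `p`-complement cannot have Sylow `p`-subgroups of
order `p ^ 2`. -/
theorem SSPermutableOrAbnormal.index_ne_prime_sq (h : SSPermutableOrAbnormal G)
    (hcore : ∀ N : Subgroup G, N.Normal → IsPGroup p N → N = ⊥) {V : Subgroup G} [V.Normal]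
    (hV : ¬ p ∣ Nat.card V) : V.index ≠ p ^ 2 := by
  intro hidx
  have hp : p.Prime := Fact.out
  let P : Sylow p G := default
  have hcopP : Nat.Coprime (p ^ 2) (P : Subgroup G).index :=
    Nat.Coprime.pow_left _ (hp.coprime_iff_not_dvd.2 P.not_dvd_index)
  have hcardP : Nat.card P = p ^ 2 := by
    have e : Nat.card V * p ^ 2 = Nat.card P * (P : Subgroup G).index := by
      rw [← hidx, card_mul_index]
      exact (card_mul_index (P : Subgroup G)).symm
    obtain ⟨n, hn⟩ := IsPGroup.iff_card.1 P.isPGroup'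
    refine Nat.dvd_antisymm ?_ ?_
    · refine Nat.Coprime.dvd_of_dvd_mul_left (m := Nat.card V) ?_ ⟨_, e⟩
      rw [hn]
      exact Nat.Coprime.pow_left _ (hp.coprime_iff_not_dvd.2 hV)
    · exact hcopP.dvd_of_dvd_mul_right (e ▸ dvd_mul_left _ _)
  have hsup : V ⊔ (P : Subgroup G) = ⊤ := by
    refine index_eq_one.1 (Nat.eq_one_of_dvd_coprimes hcopP ?_ ?_)
    · exact hidx ▸ index_dvd_of_le le_sup_left
    · exact index_dvd_of_le le_sup_right
  have hcomm : ∀ x ∈ (P : Subgroup G), ∀ y ∈ (P : Subgroup G), Commute x y := fun x hx y hy =>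
    congrArg Subtype.val
      ((IsPGroup.isMulCommutative_of_card_eq_prime_sq hcardP).is_comm.comm
        (⟨x, hx⟩ : P) (⟨y, hy⟩ : P))
  have hfaith : ∀ K : Subgroup G, K ≤ P → (∀ x ∈ K, ∀ v ∈ V, Commute x v) → K = ⊥ := by
    intro K hKP hKV
    refine hcore K ⟨fun x hx g => ?_⟩ (P.isPGroup'.to_le hKP)
    obtain ⟨v, hv, u, hu, rfl⟩ := mem_sup_of_normal_left.1 (hsup ▸ mem_top g)
    have : Commute x (v * u) := (hKV x hx v hv).mul_right (hcomm x (hKP hx) u hu)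
    rwa [mul_inv_eq_iff_eq_mul.2 this.symm.eq]
  have hlt : ∀ {K : Subgroup G}, K ≤ P → K ≠ P → Nat.card K ∣ p := by
    intro K hKP hne
    obtain ⟨n, hn, e⟩ := (Nat.dvd_prime_pow hp).1 (hcardP ▸ card_dvd_of_le hKP)
    interval_cases n
    · simp [e]
    · simp [e]
    · exact absurd (eq_of_le_of_card_ge hKP (by rw [e]; exact hcardP.le)) hne
  have hzp : ∀ {x : G}, x ∈ (P : Subgroup G) → x ^ p = 1 → zpowers x < P := by
    intro x hx hxp
    refine lt_of_le_of_ne (zpowers_le.2 hx) fun e => ?_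
    have h1 : Nat.card (zpowers x) ∣ p := by
      rw [Nat.card_zpowers]
      exact orderOf_dvd_of_pow_eq_one hxp
    rw [e] at h1
    have h2 : p ^ 2 ∣ p ^ 1 := by simpa using hcardP ▸ h1
    exact absurd ((Nat.pow_dvd_pow_iff_le_right hp.one_lt).1 h2) (by norm_num)
  obtain ⟨⟨x, hxP⟩, hx⟩ := exists_prime_orderOf_dvd_card' (G := P) p
    (hcardP ▸ dvd_pow_self p two_ne_zero)
  have hxp : x ^ p = 1 := by
    simpa [hx] using congrArg Subtype.val (pow_orderOf_eq_one (⟨x, hxP⟩ : P))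
  have hx1 : x ≠ 1 := by
    rintro rfl
    exact hp.ne_one (hx.symm.trans (orderOf_eq_one_iff.2 rfl))
  obtain ⟨X, hX, hfac⟩ := (h.isSSPermutable_of_lt_sylow
    (hzp hxP hxp)).exists_sup_eq_sylow_and_factorization P (hzp hxP hxp).le hV hsup
  have hXP : X ≤ P := hX ▸ le_sup_right
  have hXne : X ≠ P := by
    rintro rfl
    refine hx1 (zpowers_eq_bot.1 (hfaith _ (zpowers_le.2 hxP) fun y hy v hv => ?_))
    obtain ⟨a, -, b, -, rfl, ha, hb⟩ := hfac v hv
    exact (ha y hy).mul_right (hb y (zpowers_le.2 hxP hy))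
  have hXbot : X ≠ ⊥ := by
    rintro rfl
    exact (hzp hxP hxp).ne (by simpa using hX)
  obtain ⟨y, hyX, hy1⟩ := X.bot_or_exists_ne_one.resolve_left hXbot
  have hXcard : Nat.card X = p :=
    ((Nat.dvd_prime hp).1 (hlt hXP hXne)).resolve_left fun e => hXbot (card_eq_one.1 e)
  have hyp : y ^ p = 1 := by
    simpa [hXcard] using congrArg Subtype.val (pow_card_eq_one' (x := (⟨y, hyX⟩ : X)))
  have hXy : X ≤ zpowers y := by
    intro z hz
    obtain ⟨n, hn⟩ := mem_zpowers_of_prime_card hXcard (g := (⟨y, hyX⟩ : X)) (g' := ⟨z, hz⟩)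
      (by simpa [Subtype.ext_iff] using hy1)
    exact ⟨n, congrArg Subtype.val hn⟩
  have hxy : Commute x y := hcomm x hxP y (hXP hyX)
  have hxyp : (x * y) ^ p = 1 := by rw [hxy.mul_pow, hxp, hyp, one_mul]
  have hxyP : x * y ∈ (P : Subgroup G) := mul_mem hxP (hXP hyX)
  obtain ⟨Y, hY, hfac'⟩ := (h.isSSPermutable_of_lt_sylow
    (hzp hxyP hxyp)).exists_sup_eq_sylow_and_factorization P (hzp hxyP hxyp).le hV hsup
  have hYP : Y ≤ P := hY ▸ le_sup_right
  have hYbot : Y = ⊥ := by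
    refine hfaith Y hYP fun z hz v hv => ?_
    obtain ⟨c, hc, d, -, rfl, hcxy, hd⟩ := hfac' v hv
    refine Commute.mul_right ?_ (hd z hz)
    obtain ⟨a, ha, b, hb, rfl, hax, hbX⟩ := hfac c hc
    have hxa := hax x (mem_zpowers x)
    have hyb := hbX y hyX
    obtain ⟨hya, hxb⟩ := commute_of_commute_mul hV hxy hyp ha hxa hyb (hcxy _ (mem_zpowers _))
    have hle : (P : Subgroup G) ≤ centralizer {a * b} := by
      rw [← hX]
      refine sup_le (zpowers_le.2 ?_) (hXy.trans (zpowers_le.2 ?_))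
      · exact mem_centralizer_singleton_iff.2 (hxa.mul_right hxb).eq
      · exact mem_centralizer_singleton_iff.2 (hya.mul_right hyb).eq
    exact mem_centralizer_singleton_iff.1 (hle (hYP hz))
  exact (hzp hxyP hxyp).ne (by simpa [hYbot] using hY)

end Structure

section AlmostPClosed

variable {G : Type*} [Group G] {p : ℕ}

theorem IsPGroup.le_of_not_dvd_relIndex [Fact p.Prime] [Finite G] {O M X : Subgroup G} [O.Normal]
    (hX : IsPGroup p X) (hXM : X ≤ M) (h : ¬ p ∣ O.relIndex M) : X ≤ O := by
  rw [← relIndex_eq_one]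
  obtain ⟨n, hn⟩ := IsPGroup.iff_card.1 hX
  obtain ⟨k, -, hk⟩ := (Nat.dvd_prime_pow Fact.out).1 (hn ▸ relIndex_dvd_card O X)
  rw [hk]
  have hdvd : O.relIndex X ∣ O.relIndex M := by
    have : (O.subgroupOf M).relIndex (X.subgroupOf M) ∣ (O.subgroupOf M).index :=
      relIndex_dvd_index_of_normal _ _
    rwa [relIndex_subgroupOf hXM] at this
  rcases k with _ | k
  · simp
  · exact absurd ((dvd_pow_self p k.succ_ne_zero).trans (hk ▸ hdvd)) h

/-- `G` has a normal subgroup of index `1` or `p` whose Sylow `p`-subgroup is normal in `G`. -/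
def AlmostPClosed (p : ℕ) (G : Type*) [Group G] : Prop :=
  ∃ M O : Subgroup G, M.Normal ∧ O.Normal ∧ O ≤ M ∧ IsPGroup p O ∧ ¬ p ∣ O.relIndex M ∧
    M.index ∣ p

theorem AlmostPClosed.of_quotient {N : Subgroup G} [N.Normal] (hN : IsPGroup p N)
    (h : AlmostPClosed p (G ⧸ N)) : AlmostPClosed p G := by
  obtain ⟨M, O, hM, hO, hOM, hpO, hrel, hidx⟩ := h
  have hsurj := QuotientGroup.mk'_surjective N
  refine ⟨M.comap (QuotientGroup.mk' N), O.comap (QuotientGroup.mk' N), hM.comap _, hO.comap _,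
    comap_mono hOM, hpO.comap_of_ker_isPGroup _ (by rwa [QuotientGroup.ker_mk']), ?_, ?_⟩
  · rwa [relIndex_comap, map_comap_eq_self_of_surjective hsurj]
  · rwa [index_comap_of_surjective _ hsurj]

theorem exists_normal_isPGroup_ne_bot [Finite G] [Group.IsSolvable G] [Nontrivial G] :
    ∃ q : ℕ, q.Prime ∧ ∃ Q : Subgroup G, Q.Normal ∧ IsPGroup q Q ∧ Q ≠ ⊥ := by
  classical
  have hex := Group.IsSolvable.solvable (G := G)
  obtain ⟨n, hn⟩ : ∃ n, Nat.find hex = n + 1 := by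
    refine Nat.exists_eq_succ_of_ne_zero fun h0 => ?_
    have := Nat.find_spec hex
    rw [h0, derivedSeries_zero] at this
    exact top_ne_bot this
  have hbot : derivedSeries G (n + 1) = ⊥ := hn ▸ Nat.find_spec hex
  have hne : derivedSeries G n ≠ ⊥ := Nat.find_min hex (by omega)
  set A := derivedSeries G n with hA
  have hAn : A.Normal := derivedSeries_normal G n
  rw [derivedSeries_succ] at hbot
  have hcomm : IsMulCommutative A := by
    rw [commutator_eq_bot_iff_le_centralizer] at hbot
    exact le_centralizer_iff_isMulCommutative.1 hbot
  have hnt : Nontrivial A := (nontrivial_iff_ne_bot A).2 hne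
  obtain ⟨q, hq, hdvd⟩ := Nat.exists_prime_and_dvd (Finite.one_lt_card (α := A)).ne'
  have : Fact q.Prime := ⟨hq⟩
  let S : Sylow q A := default
  have := S.characteristic_of_normal (normal_of_isMulCommutative _)
  refine ⟨q, hq, (S : Subgroup A).map A.subtype, ConjAct.normal_of_characteristic_of_normal,
    S.isPGroup'.map _, fun h => ?_⟩
  rw [(map_eq_bot_iff_of_injective _ A.subtype_injective)] at h
  exact S.ne_bot_of_dvd_card hdvd h

/-- The subgroup generated by an element of order `q` that is central in a Sylow `q`-subgroup is
normalized by every Sylow subgroup of `G`. -/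
theorem SSPermutableOrAbnormal.exists_normal_card_eq [Finite G] [Group.IsSolvable G]
    (h : SSPermutableOrAbnormal G) {q : ℕ} [Fact q.Prime] {A : Subgroup G} [A.Normal]
    (hA : IsPGroup q A) (hne : A ≠ ⊥) :
    ∃ N : Subgroup G, N.Normal ∧ N ≤ A ∧ Nat.card N = q := by
  let Q : Sylow q G := default
  let _ : MulAction Q A :=
    MulAction.compHom A ((MulAut.conjNormal (H := A)).comp (Q : Subgroup G).subtype)
  have hsmul : ∀ (g : Q) (a : A), ((g • a : A) : G) = g * a * (g : G)⁻¹ := fun g a => rfl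
  have hnt : Nontrivial A := (nontrivial_iff_ne_bot A).2 hne
  have hdvd : q ∣ Nat.card A := by
    obtain ⟨n, hn⟩ := IsPGroup.iff_card.1 hA
    rw [hn]
    refine dvd_pow_self q fun h0 => ?_
    rw [h0, pow_zero] at hn
    exact (Finite.one_lt_card (α := A)).ne' hn
  obtain ⟨b, hb, hb1⟩ := Q.isPGroup'.exists_fixed_point_of_prime_dvd_card_of_fixed_point A hdvd
    (a := 1) (fun g => Subtype.ext (by rw [hsmul]; simp))
  have hbQ : ∀ g ∈ Q, Commute g (b : G) := fun g hg =>
    mul_inv_eq_iff_eq_mul.1 (by rw [← hsmul ⟨g, hg⟩ b, hb ⟨g, hg⟩])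
  obtain ⟨x, hx⟩ : ∃ x : zpowers b, orderOf x = q := by
    apply exists_prime_orderOf_dvd_card'
    obtain ⟨n, hn⟩ := IsPGroup.iff_card.1 (hA.to_subgroup (zpowers b))
    rw [hn]
    refine dvd_pow_self q fun h0 => hb1 ?_
    rw [h0, pow_zero, Nat.card_zpowers, orderOf_eq_one_iff] at hn
    exact hn.symm
  obtain ⟨k, hk⟩ := x.2
  set y : G := ((x : A) : G) with hy
  have hyA : y ∈ A := x.1.2
  have hoy : orderOf y = q := by rw [hy, orderOf_coe, orderOf_coe, hx]
  have hyQ : ∀ g ∈ Q, Commute g y := fun g hg => by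
    rw [hy, ← hk]
    exact (hbQ g hg).zpow_right k
  have hle : zpowers y ≤ A := by rwa [zpowers_le]
  refine ⟨zpowers y, normalizer_eq_top_iff.1 ?_, hle, by rw [Nat.card_zpowers, hoy]⟩
  by_contra hidx
  obtain ⟨r, hr, hdvd⟩ := Nat.exists_prime_and_dvd (mt index_eq_one.1 hidx)
  have : Fact r.Prime := ⟨hr⟩
  obtain ⟨R, hR⟩ : ∃ R : Sylow r G, (R : Subgroup G) ≤ normalizer (zpowers y : Set G) := by
    by_cases hrq : q = r
    · subst hrq
      refine ⟨Q, fun g hg => centralizer_le_normalizer _ ?_⟩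
      rw [mem_centralizer_iff]
      rintro _ ⟨k, rfl⟩
      exact ((hyQ g hg).zpow_right k).eq.symm
    · refine ⟨default, le_normalizer_iff.2 fun g hg z hz => ?_⟩
      have hZ : IsPGroup q (zpowers y) := hA.to_le hle
      obtain ⟨z', hz', g', hg', e⟩ :=
        (h.permutes_sylow hrq hZ (default : Sylow r G)).symm.exists_mul_eq hg hz
      have hdisj := IsPGroup.disjoint_of_ne q r hrq _ _ hA (default : Sylow r G).isPGroup'
      have hmem : g' * g⁻¹ ∈ A := by
        have := mul_mem (inv_mem (hle hz')) (Normal.conj_mem ‹A.Normal› z (hle hz) g)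
        rwa [← e, mul_assoc, inv_mul_cancel_left] at this
      have h1 := disjoint_def.1 hdisj hmem (mul_mem hg' (inv_mem hg))
      rwa [← e, mul_assoc, h1, mul_one]
  exact R.not_dvd_index (hdvd.trans (index_dvd_of_le hR))

theorem MonoidHom.exists_normal_index_eq {C : Type*} [CommGroup C] [Finite C] [IsCyclic C]
    (f : G →* C) (hp : p ∣ Nat.card f.range) : ∃ M : Subgroup G, M.Normal ∧ M.index = p := by
  refine ⟨(powMonoidHom p : f.range →* f.range).range.comap f.rangeRestrict, inferInstance, ?_⟩
  rw [index_comap_of_surjective _ f.rangeRestrict_surjective, IsCyclic.index_powMonoidHom_range,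
    Nat.gcd_eq_right hp]

variable [Finite G] [Fact p.Prime]

theorem AlmostPClosed.of_normal_sylow (P : Sylow p G) (hP : (P : Subgroup G).Normal) :
    AlmostPClosed p G :=
  ⟨⊤, P, inferInstance, hP, le_top, P.isPGroup', by
    rw [relIndex_top_right]; exact P.not_dvd_index, by simp⟩

theorem AlmostPClosed.of_quotient_of_forall_index_ne {N : Subgroup G} [N.Normal] {q : ℕ}
    [Fact q.Prime] (hN : Nat.card N = q)
    (hidx : ∀ M : Subgroup G, M.Normal → M.index ≠ p) (h : AlmostPClosed p (G ⧸ N)) :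
    AlmostPClosed p G := by
  have hp : p.Prime := Fact.out
  obtain ⟨M, O, hM, hO, -, hpO, hrel, hMi⟩ := h
  have hsurj := QuotientGroup.mk'_surjective N
  obtain rfl : M = ⊤ := by
    refine index_eq_one.1 (((Nat.dvd_prime hp).1 hMi).resolve_right fun e => ?_)
    exact hidx (M.comap (QuotientGroup.mk' N)) (hM.comap _)
      ((index_comap_of_surjective _ hsurj).trans e)
  let P : Sylow p G := default
  let P' : Sylow p (G ⧸ N) := P.mapSurjective hsurj
  have hP'O : (P : Subgroup G).map (QuotientGroup.mk' N) = O :=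
    le_antisymm ((P.isPGroup'.map _).le_of_not_dvd_relIndex le_top hrel) (hpO.le_sylow_of_normal P')
  have hL : (N ⊔ (P : Subgroup G)).Normal := by
    rw [← QuotientGroup.comap_map_mk', hP'O]
    exact hO.comap _
  have hcyc : IsCyclic N := isCyclic_of_prime_card hN
  let f : G →* (ZMod (Nat.card N))ˣ :=
    (IsCyclic.mulAutMulEquiv N).toMonoidHom.comp (MulAut.conjNormal (H := N))
  have hzmod : IsCyclic (ZMod (Nat.card N))ˣ := by
    rw [hN]; infer_instance
  have hne : NeZero (Nat.card N) := ⟨Nat.card_pos.ne'⟩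
  have hPf : (P : Subgroup G) ≤ f.ker := by
    intro g hg
    by_contra hne
    obtain ⟨k, hk⟩ := P.isPGroup'.map f ⟨f g, mem_map_of_mem f hg⟩
    have hord : orderOf (f g) ∣ p ^ k := orderOf_dvd_of_pow_eq_one (congrArg Subtype.val hk)
    have hdvd : p ∣ orderOf (f g) := by
      obtain ⟨j, -, hj⟩ := (Nat.dvd_prime_pow hp).1 hord
      rw [hj]
      refine dvd_pow_self p fun h0 => hne ?_
      rwa [h0, pow_zero, orderOf_eq_one_iff] at hj
    obtain ⟨K, hK, e⟩ := f.exists_normal_index_eq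
      (hdvd.trans (f.range.orderOf_dvd_natCard ⟨g, rfl⟩))
    exact hidx K hK e
  have hcomm : (P : Subgroup G) ≤ centralizer (N : Set G) := by
    intro g hg
    rw [mem_centralizer_iff]
    intro n hn
    have : MulAut.conjNormal g = (1 : MulAut N) := by
      have := hPf hg
      rw [MonoidHom.mem_ker] at this
      exact (IsCyclic.mulAutMulEquiv N).injective (this.trans (map_one _).symm)
    have := congrArg Subtype.val (DFunLike.congr_fun this ⟨n, hn⟩)
    rw [MulAut.conjNormal_apply] at this
    exact (mul_inv_eq_iff_eq_mul.1 this).symm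
  let S : Sylow p (N ⊔ (P : Subgroup G) : Subgroup G) := P.subtype le_sup_right
  have hS : (S : Subgroup (N ⊔ (P : Subgroup G) : Subgroup G)) =
      (P : Subgroup G).subgroupOf (N ⊔ P) := P.coe_subtype le_sup_right
  have hSn : (S : Subgroup (N ⊔ (P : Subgroup G) : Subgroup G)).Normal := by
    rw [hS, normal_subgroupOf_iff_le_normalizer le_sup_right]
    exact sup_le ((le_centralizer_iff.1 hcomm).trans (centralizer_le_normalizer _)) le_normalizer
  have := S.characteristic_of_normal hSn
  refine .of_normal_sylow P ?_
  rw [← map_subgroupOf_eq_of_le (le_sup_right : (P : Subgroup G) ≤ N ⊔ P), ← hS]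
  exact ConjAct.normal_of_characteristic_of_normal

theorem AlmostPClosed.of_normal_index_eq (h : SSPermutableOrAbnormal G)
    (hcore : ∀ N : Subgroup G, N.Normal → IsPGroup p N → N = ⊥) {M : Subgroup G} [M.Normal]
    (hidx : M.index = p) (hM : AlmostPClosed p M) : AlmostPClosed p G := by
  have hp : p.Prime := Fact.out
  obtain ⟨V, O, hV, hO, hOV, hpO, hrel, hVi⟩ := hM
  let C : Subgroup M := ⨅ S : Sylow p M, (S : Subgroup M)
  have hC : C.Characteristic := by
    refine characteristic_iff_le_comap.2 fun φ x hx => mem_iInf.2 fun S => ?_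
    have hmem : x ∈ (φ⁻¹ : MulAut M) • (S : Subgroup M) := mem_iInf.1 hx ((φ⁻¹ : MulAut M) • S)
    rwa [mem_pointwise_smul_iff_inv_smul_mem, inv_inv] at hmem
  have hCbot := hcore (C.map M.subtype) ConjAct.normal_of_characteristic_of_normal
    (((default : Sylow p M).isPGroup'.to_le (iInf_le _ default)).map _)
  rw [map_eq_bot_iff_of_injective _ M.subtype_injective] at hCbot
  obtain rfl : O = ⊥ := eq_bot_iff.2 (hCbot ▸ le_iInf hpO.le_sylow_of_normal)
  rw [relIndex_bot_left] at hrel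
  have hmem : ∀ m : M, m ∈ V ↔ ¬ p ∣ orderOf m := by
    refine fun m => ⟨fun hm hdvd => hrel (hdvd.trans (V.orderOf_dvd_natCard hm)), fun hm => ?_⟩
    have h1 : (m : M ⧸ V) ^ p = 1 := by
      rw [← QuotientGroup.mk_pow, QuotientGroup.eq_one_iff]
      obtain ⟨c, hc⟩ := hVi
      rw [hc, pow_mul]
      exact pow_mem (pow_index_mem V m) c
    have h2 : (m : M ⧸ V) ^ orderOf m = 1 := by
      rw [← QuotientGroup.mk_pow, pow_orderOf_eq_one, QuotientGroup.mk_one]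
    rw [← QuotientGroup.eq_one_iff]
    simpa [(hp.coprime_iff_not_dvd.2 hm).gcd_eq_one] using pow_gcd_eq_one.2 ⟨h1, h2⟩
  have hVn : (V.map M.subtype).Normal := by
    refine ⟨?_⟩
    rintro _ ⟨v, hv, rfl⟩ g
    refine ⟨MulAut.conjNormal g v, ?_, MulAut.conjNormal_apply g v⟩
    exact (hmem _).2 (by rw [MulEquiv.orderOf_eq]; exact (hmem v).1 hv)
  have hcard : Nat.card (V.map M.subtype) = Nat.card V :=
    card_map_of_injective M.subtype_injective
  rcases (Nat.dvd_prime hp).1 hVi with e | e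
  · refine ⟨M, ⊥, ‹_›, inferInstance, bot_le, .of_bot, ?_, hidx.dvd⟩
    rw [index_eq_one.1 e, card_top] at hrel
    rwa [relIndex_bot_left]
  · refine absurd ?_ (h.index_ne_prime_sq hcore (V := V.map M.subtype) (hcard ▸ hrel))
    rw [index_map_subtype, e, hidx, sq]

/-- A finite solvable group all of whose subgroups are SS-permutable or abnormal has, for each
prime `p`, a normal subgroup of index `1` or `p` with a normal Sylow `p`-subgroup. -/
theorem SSPermutableOrAbnormal.almostPClosed [Group.IsSolvable G]
    (h : SSPermutableOrAbnormal G) : AlmostPClosed p G := by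
  induction hn : Nat.card G using Nat.strong_induction_on generalizing G with
  | _ n ih =>
    subst hn
    have hquot : ∀ (N : Subgroup G) [N.Normal], N ≠ ⊥ → AlmostPClosed p (G ⧸ N) := by
      intro N _ hne
      refine ih _ ?_ (h.quotient N) rfl
      rw [N.card_eq_card_quotient_mul_card_subgroup]
      exact lt_mul_of_one_lt_right Nat.card_pos ((one_lt_card_iff_ne_bot N).2 hne)
    by_cases hcore : ∀ N : Subgroup G, N.Normal → IsPGroup p N → N = ⊥
    swap
    · push Not at hcore
      obtain ⟨N, hN, hpN, hne⟩ := hcore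
      exact .of_quotient hpN (hquot N hne)
    by_cases hidx : ∀ M : Subgroup G, M.Normal → M.index ≠ p
    swap
    · push Not at hidx
      obtain ⟨M, hM, e⟩ := hidx
      refine .of_normal_index_eq h hcore e (ih _ ?_ (h.subgroup M) rfl)
      rw [← M.card_mul_index, e]
      exact lt_mul_of_one_lt_right Nat.card_pos (Fact.out : p.Prime).one_lt
    rcases subsingleton_or_nontrivial G with _ | _
    · exact .of_normal_sylow default (Subsingleton.elim ⊤ ((default : Sylow p G) : Subgroup G) ▸
        inferInstance)
    obtain ⟨q, hq, A, hA, hqA, hne⟩ := exists_normal_isPGroup_ne_bot (G := G)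
    have : Fact q.Prime := ⟨hq⟩
    obtain ⟨N, hN, -, hcard⟩ := h.exists_normal_card_eq hqA hne
    refine .of_quotient_of_forall_index_ne hcard hidx (hquot N ?_)
    rintro rfl
    exact hq.one_lt.ne' (by simpa using hcard.symm)

end AlmostPClosed

section Supplements

instance Nat.Primes.fact_prime (p : Nat.Primes) : Fact (p : ℕ).Prime :=
  ⟨p.2⟩

variable {G : Type*} [Group G]

theorem Subgroup.sup_eq_top_of_index_dvd_prime {p : ℕ} (hp : p.Prime) {M L : Subgroup G}
    (hM : M.index ∣ p) (hL : ¬ L ≤ M) : M ⊔ L = ⊤ := by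
  have hmul := relIndex_mul_index (le_sup_left : M ≤ M ⊔ L)
  rcases (Nat.dvd_prime hp).1 ((index_dvd_of_le le_sup_left).trans hM : (M ⊔ L).index ∣ p)
    with e | e
  · exact index_eq_one.1 e
  · refine absurd ((le_sup_right : L ≤ M ⊔ L).trans (relIndex_eq_one.1 ?_)) hL
    rw [e] at hmul
    exact Nat.dvd_one.1 (Nat.dvd_of_mul_dvd_mul_right hp.pos (by rwa [hmul, one_mul]))

theorem Subgroup.eq_top_of_forall_prime_not_dvd_index {H : Subgroup G}
    (h : ∀ p : ℕ, p.Prime → ¬ p ∣ H.index) : H = ⊤ := by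
  by_contra hne
  obtain ⟨p, hp, hdvd⟩ := Nat.exists_prime_and_dvd (mt index_eq_one.1 hne)
  exact h p hp hdvd

variable [Finite G]

theorem Subgroup.iSup_sylow_eq_top :
    ⨆ q : Nat.Primes, ((default : Sylow q G) : Subgroup G) = ⊤ :=
  eq_top_of_forall_prime_not_dvd_index fun p hp hdvd =>
    have : Fact p.Prime := ⟨hp⟩
    (default : Sylow p G).not_dvd_index (hdvd.trans (index_dvd_of_le
      (le_iSup (fun q : Nat.Primes => ((default : Sylow q G) : Subgroup G)) ⟨p, hp⟩)))

theorem SSPermutableOrAbnormal.isNSSPermutable [Group.IsSolvable G]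
    (h : SSPermutableOrAbnormal G) (H : Subgroup G) : IsNSSPermutable H := by
  have hpc : ∀ p : Nat.Primes, AlmostPClosed p G := fun p => h.almostPClosed
  choose M O hM hO hOM hpO hrel hidx using hpc
  let K : Subgroup G := ⨅ p : {p : Nat.Primes // ¬ H ≤ M p}, M p
  have hK : K.Normal := normal_iInf_normal fun p => hM p
  have hKM : ∀ p, ¬ H ≤ M p → K ≤ M p := fun p hp => iInf_le_of_le ⟨p, hp⟩ le_rfl
  have hle : ∀ (p : Nat.Primes) (X : Subgroup G), IsPGroup p X → (¬ H ≤ M p → X ≤ M p) →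
      X ≤ K := by
    refine fun p X hX hXM => le_iInf fun ⟨q, hq⟩ => ?_
    by_cases hpq : p = q
    · exact hpq ▸ hXM (hpq ▸ hq)
    · refine hX.le_of_not_dvd_relIndex le_top fun hdvd => hpq ?_
      rw [relIndex_top_right] at hdvd
      exact Subtype.ext ((Nat.prime_dvd_prime_iff_eq p.2 q.2).1 (hdvd.trans (hidx q)))
  have hOK : ∀ p, O p ≤ K := fun p => hle p _ (hpO p) fun _ => hOM p
  have hPO : ∀ (p : Nat.Primes) (X : Subgroup G), IsPGroup p X → X ≤ M p → X ≤ O p :=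
    fun p X hX hXM => hX.le_of_not_dvd_relIndex hXM (hrel p)
  have htop : H ⊔ K = ⊤ := by
    refine eq_top_of_forall_prime_not_dvd_index fun p hp hdvd => ?_
    obtain ⟨p, rfl⟩ : ∃ p' : Nat.Primes, (p' : ℕ) = p := ⟨⟨p, hp⟩, rfl⟩
    have := hM p
    by_cases hHM : H ≤ M p
    · let P : Sylow p G := default
      refine P.not_dvd_index (hdvd.trans (index_dvd_of_le (le_sup_of_le_right ?_)))
      exact hle p P P.isPGroup' fun hn => absurd hHM hn
    · have hsup : M p ⊔ (H ⊔ K) = ⊤ :=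
        sup_eq_top_of_index_dvd_prime p.2 (hidx p) fun hL => hHM (le_sup_left.trans hL)
      have hmul := index_eq_relIndex_of_mul_eq_univ (H := M p) (K := H ⊔ K)
        (by rw [← normal_mul, hsup, coe_top])
      rw [hmul] at hdvd
      exact hrel p (hdvd.trans (relIndex_dvd_of_le_left _ (le_sup_of_le_right (hOK _))))
  refine ⟨K, hK, by rw [← mul_normal, htop, coe_top], fun p hp X => ?_⟩
  obtain ⟨p, rfl⟩ : ∃ p' : Nat.Primes, (p' : ℕ) = p := ⟨⟨p, hp.out⟩, rfl⟩
  have hmax : ∀ Y : Subgroup G, Y ≤ K → IsPGroup p Y →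
      (X : Subgroup K).map K.subtype ≤ Y → (X : Subgroup K).map K.subtype = Y := by
    intro Y hYK hY hXY
    rw [← map_subgroupOf_eq_of_le hYK]
    rw [map_le_iff_le_comap] at hXY
    exact congrArg _ (X.is_maximal' (hY.comap_of_injective _ K.subtype_injective) hXY).symm
  have hXp : IsPGroup p ((X : Subgroup K).map K.subtype) := X.isPGroup'.map _
  change H.Permutes ((X : Subgroup K).map K.subtype)
  by_cases hHM : H ≤ M p
  · obtain ⟨P, hXP⟩ := hXp.exists_le_sylow
    rw [hmax P (hle p P P.isPGroup' fun hn => absurd hHM hn) P.isPGroup' hXP]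
    have hH : ⨆ q : Nat.Primes, ((default : Sylow q H) : Subgroup H).map H.subtype = H := by
      rw [← Subgroup.map_iSup, iSup_sylow_eq_top, ← MonoidHom.range_eq_map, range_subtype]
    rw [← hH]
    refine Permutes.iSup_left fun q => ?_
    have hq := (default : Sylow q H).isPGroup'.map H.subtype
    by_cases hqp : q = p
    · subst hqp
      have := hO q
      exact permutes_of_le ((hPO _ _ hq ((map_subtype_le _).trans hHM)).trans
        ((hpO q).le_sylow_of_normal P))
    · exact h.permutes_sylow (mt Subtype.ext hqp) hq P
  · have := hO p
    rw [hmax _ (hOK p) (hpO _)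
      (hPO p _ hXp ((map_subtype_le _).trans (hKM _ hHM)))]
    exact permutes_of_normal _ _

end Supplements

section Transitivity

variable {G : Type*} [Group G]

theorem Subgroup.exists_normal_not_le_commutator_le [Group.IsSolvable G] {M : Subgroup G}
    (hM : M ≠ ⊤) : ∃ D : Subgroup G, D.Normal ∧ ¬ D ≤ M ∧ ⁅D, D⁆ ≤ M := by
  classical
  obtain ⟨m, hm⟩ := Group.IsSolvable.solvable (G := G)
  have hex : ∃ n, derivedSeries G n ≤ M := ⟨m, hm.trans_le bot_le⟩
  obtain ⟨n, hn⟩ : ∃ n, Nat.find hex = n + 1 := by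
    refine Nat.exists_eq_succ_of_ne_zero fun h0 => hM (top_le_iff.1 ?_)
    simpa [h0] using Nat.find_spec hex
  refine ⟨derivedSeries G n, derivedSeries_normal G n, Nat.find_min hex (by omega), ?_⟩
  rw [← derivedSeries_succ, ← hn]
  exact Nat.find_spec hex

variable [Finite G]

theorem Subgroup.sylow_sup_commutator_normal {p : ℕ} [Fact p.Prime] {D : Subgroup G} [D.Normal]
    (X : Sylow p D) : ((X : Subgroup D).map D.subtype ⊔ ⁅D, D⁆).Normal := by
  have hconj : ∀ (g : G), ∀ x ∈ (X : Subgroup D).map D.subtype,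
      g * x * g⁻¹ ∈ (X : Subgroup D).map D.subtype ⊔ ⁅D, D⁆ := by
    rintro g _ ⟨x, hx, rfl⟩
    obtain ⟨d, hd⟩ := MulAction.exists_smul_eq D X (MulAut.conjNormal (H := D) g • X)
    have hmem : MulAut.conjNormal (H := D) g • x ∈
        ((MulAut.conjNormal (H := D) g • X : Sylow p D) : Subgroup D) :=
      smul_mem_pointwise_smul _ _ _ hx
    rw [← hd, Sylow.coe_smul_eq_map] at hmem
    obtain ⟨y, hy, e⟩ := hmem
    have e' : (d : G) * y * (d : G)⁻¹ = g * x * g⁻¹ := congrArg Subtype.val e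
    have hy' : (y : G) ∈ (X : Subgroup D).map D.subtype := mem_map_of_mem D.subtype hy
    have hmul := mul_mem (mem_sup_right (commutator_mem_commutator d.2 y.2))
      (mem_sup_left hy' : (y : G) ∈ (X : Subgroup D).map D.subtype ⊔ ⁅D, D⁆)
    rw [commutatorElement_def, inv_mul_cancel_right, e'] at hmul
    exact hmul
  refine ⟨fun k hk g => ?_⟩
  obtain ⟨c, hc, x, hx, rfl⟩ := mem_sup_of_normal_left.1 (sup_comm _ ⁅D, D⁆ ▸ hk)
  rw [← conj_mul]
  exact mul_mem (mem_sup_right (Normal.conj_mem inferInstance c hc g)) (hconj g x hx)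

theorem IsSSPermutable.of_isCoatom [Group.IsSolvable G] {M : Subgroup G} (hM : IsCoatom M) :
    IsSSPermutable M := by
  obtain ⟨D, hD, hDM, hcomm⟩ := exists_normal_not_le_commutator_le hM.1
  refine ⟨D, ?_, fun p hp X => ?_⟩
  · rw [← mul_normal, hM.2 _ (left_lt_sup.2 hDM), coe_top]
  · change M.Permutes ((X : Subgroup D).map D.subtype)
    by_cases hX : (X : Subgroup D).map D.subtype ≤ M
    · exact (permutes_of_le hX).symm
    have hN := sylow_sup_commutator_normal X
    set Y := (X : Subgroup D).map D.subtype
    have htop : M ⊔ (Y ⊔ ⁅D, D⁆) = ⊤ :=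
      hM.2 _ (left_lt_sup.2 fun hle => hX (le_sup_left.trans hle))
    refine Permutes.symm (permutes_of_forall_exists fun y hy m hm => ?_)
    have : y * m ∈ (M : Set G) * ((Y ⊔ ⁅D, D⁆ : Subgroup G) : Set G) := by
      rw [← mul_normal, htop]; trivial
    obtain ⟨a, ha, b, hb, e⟩ := this
    obtain ⟨c, hc, d, hd, rfl⟩ := mem_sup_of_normal_left.1 (sup_comm Y ⁅D, D⁆ ▸ hb)
    exact ⟨a * c, mul_mem ha (hcomm hc), d, hd, by rw [mul_assoc]; exact e⟩

theorem IsSSTGroup.isSSPermutable [Group.IsSolvable G] (h : IsSSTGroup G) (H : Subgroup G) :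
    IsSSPermutable H := by
  induction H using WellFoundedGT.induction with
  | ind H ih =>
    rcases eq_or_ne H ⊤ with rfl | hne
    · exact ⟨⊥, by simp, fun p _ X => (permutes_of_le le_top).symm⟩
    obtain ⟨M, hHM⟩ := exists_covBy_of_wellFoundedLT (α := Subgroup G) (a := H) (by simpa using hne)
    refine h H M hHM.le (.of_isCoatom ?_) (ih M hHM.lt)
    refine ⟨fun htop => hHM.lt.not_ge (subgroupOf_eq_top.1 htop), fun L hL => ?_⟩
    have hlt : H < L.map M.subtype := by
      rw [← map_subgroupOf_eq_of_le hHM.le]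
      exact (map_lt_map_iff_of_injective M.subtype_injective).2 hL
    have hLM := (hHM.eq_or_eq hlt.le (map_subtype_le L)).resolve_left hlt.ne'
    refine map_injective M.subtype_injective (hLM.trans ?_)
    rw [← MonoidHom.range_eq_map, range_subtype]

end Transitivity

/-- Corollary 1.7. -/
theorem corollary17 {G : Type*} [Group G] [Finite G] (hsol : IsSolvable G) :
    List.TFAE
      [IsSSTGroup G,
       ∀ H : Subgroup G, IsSSPermutable H ∨ IsAbnormal H,
       ∀ H : Subgroup G, IsNSSPermutable H ∨ IsAbnormal H] := by
  have : Group.IsSolvable G := hsol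
  have hss : ∀ {H : Subgroup G}, IsNSSPermutable H → IsSSPermutable H :=
    fun ⟨K, _, hK⟩ => ⟨K, hK⟩
  tfae_have 1 → 2 := fun h H => .inl (h.isSSPermutable H)
  tfae_have 2 → 3 := fun h H => .inl (SSPermutableOrAbnormal.isNSSPermutable h H)
  tfae_have 3 → 2 := fun h H => (h H).imp_left hss
  tfae_have 2 → 1 := fun h H _ _ _ _ => hss (SSPermutableOrAbnormal.isNSSPermutable h H)
  tfae_finish
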